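/- arXiv:2305.19891 — 2 statements merged into one kernel-verified Lean document; each statement's English description precedes it below -/
import Mathlib

section
/- Fix a base action ā ∈ ℝ^N, a scaling constant ε > 0, and a neighborhood depth d ≥ 1 (a natural number). Let A'' = { ā + d·ε·e_i : i ∈ {1,…,N} } ∪ { ā − d·ε·e_i : i ∈ {1,…,N} } be the set of maximally perturbed actions, where e_i is the i-th standard basis vector, and let A' = { ā + m·ε·e_i : i ∈ {1,…,N}, m ∈ {1,…,d} } ∪ { ā − m·ε·e_i : i ∈ {1,…,N}, m ∈ {1,…,d} } be the neighborhood of ā. If f : ℝ^N → ℝ is concave on the convex hull of A'' (i.e., f is locally upward convex on the neighborhood), then for every a' ∈ A', f(a') ≥ min over a'' ∈ A'' of f(a''). -/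
/-- Lemma 2 of the paper: if `f` (the Q-value with the state fixed) is concave
(locally upward convex) on the convex hull of the set `A''` of maximally perturbed
actions, then the worst-case value over the whole neighborhood `A'` of the base
action `ā` is bounded below by the minimum over the maximally perturbed actions:
every `a' ∈ A'` satisfies `f a' ≥ min_{a'' ∈ A''} f a''`. -/
theorem dnc_worst_case_bound
    (N : ℕ) (abar : EuclideanSpace ℝ (Fin N))
    (ε : ℝ) (hε : 0 < ε) (d : ℕ) (hd : 1 ≤ d)
    (A'' : Set (EuclideanSpace ℝ (Fin N)))
    (hA'' : A'' = {x | ∃ i : Fin N,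
        x = abar + ((d : ℝ) * ε) • EuclideanSpace.single i (1 : ℝ) ∨
        x = abar - ((d : ℝ) * ε) • EuclideanSpace.single i (1 : ℝ)})
    (A' : Set (EuclideanSpace ℝ (Fin N)))
    (hA' : A' = {x | ∃ i : Fin N, ∃ m : ℕ, 1 ≤ m ∧ m ≤ d ∧
        (x = abar + ((m : ℝ) * ε) • EuclideanSpace.single i (1 : ℝ) ∨
         x = abar - ((m : ℝ) * ε) • EuclideanSpace.single i (1 : ℝ))})
    (f : EuclideanSpace ℝ (Fin N) → ℝ)
    (hf : ConcaveOn ℝ (convexHull ℝ A'') f) :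
    ∀ a' ∈ A', ∃ a'' ∈ A'', f a'' ≤ f a' := by
  have key : ∀ (i : Fin N) (t : ℝ), -(d : ℝ) ≤ t → t ≤ d →
      abar + (t * ε) • EuclideanSpace.single i (1 : ℝ) ∈ convexHull ℝ A'' := by
    intro i t h1 h2
    have hd0 : (0 : ℝ) < d := by exact_mod_cast hd
    have hp : abar + ((d : ℝ) * ε) • EuclideanSpace.single i (1 : ℝ) ∈ convexHull ℝ A'' :=
      subset_convexHull ℝ A'' (by rw [hA'']; exact ⟨i, Or.inl rfl⟩)
    have hm : abar - ((d : ℝ) * ε) • EuclideanSpace.single i (1 : ℝ) ∈ convexHull ℝ A'' :=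
      subset_convexHull ℝ A'' (by rw [hA'']; exact ⟨i, Or.inr rfl⟩)
    have h := (convex_convexHull ℝ A'') hp hm
      (a := (d + t) / (2 * d)) (b := (d - t) / (2 * d))
      (div_nonneg (by linarith) (by linarith)) (div_nonneg (by linarith) (by linarith))
      (by field_simp; ring)
    convert h using 1
    match_scalars
    · field_simp; ring
    · field_simp; ring
  intro a' ha'
  have hmem : a' ∈ convexHull ℝ A'' := by
    rw [hA'] at ha'
    obtain ⟨i, m, -, hm2, h | h⟩ := ha'
    · have hm3 : (m : ℝ) ≤ d := by exact_mod_cast hm2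
      rw [h]
      exact key i m (by have : (0 : ℝ) ≤ m := m.cast_nonneg
                        linarith) hm3
    · have hm3 : (m : ℝ) ≤ d := by exact_mod_cast hm2
      have := key i (-(m : ℝ)) (by linarith) (by have : (0 : ℝ) ≤ m := m.cast_nonneg
                                                 linarith)
      rw [h, sub_eq_add_neg, ← neg_smul, ← neg_mul]
      exact this
  exact hf.exists_le_of_mem_convexHull (subset_convexHull ℝ A'') hmem
end

section
/- Let N ≥ 1 and G ≥ 1, and let S = (Fin N → Fin G) be the finite set of N-dimensional action vectors with G possible values per coordinate. Let P be an S × S real matrix with all entries nonnegative such that P(a, a') > 0 whenever a and a' differ in at most one coordinate (in particular P(a, a) > 0 for all a). Then for every natural number τ ≥ N and all a, a' ∈ S, the (a, a') entry of the matrix power P^τ is strictly positive. -/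
/-- Core reachability claim in the proof of Lemma 3: for the simulated-annealing
transition matrix `P` over the finite action grid `S = Fin N → Fin G`, if every pair
of actions differing in at most one coordinate has positive one-step transition
probability, then for every `τ ≥ N` all `τ`-step transition weights are positive. -/
theorem dnc_reachability
    (N G : ℕ) (hN : 1 ≤ N) (hG : 1 ≤ G)
    (P : Matrix (Fin N → Fin G) (Fin N → Fin G) ℝ)
    (hP_nonneg : ∀ a a', 0 ≤ P a a')
    (hP_pos : ∀ a a' : Fin N → Fin G,
      (∃ i : Fin N, ∀ j : Fin N, j ≠ i → a j = a' j) → 0 < P a a') :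
    ∀ τ : ℕ, N ≤ τ → ∀ a a' : Fin N → Fin G, 0 < (P ^ τ) a a' := by
  have hnn : ∀ k : ℕ, ∀ a a', 0 ≤ (P ^ k) a a' := by
    intro k
    induction k with
    | zero =>
      intro a a'
      rw [pow_zero, Matrix.one_apply]
      split_ifs <;> norm_num
    | succ k ih =>
      intro a a'
      rw [pow_succ, Matrix.mul_apply]
      exact Finset.sum_nonneg fun b _ => mul_nonneg (ih a b) (hP_nonneg b a')
  have key : ∀ k : ℕ, ∀ a a' : Fin N → Fin G,
      (∀ j : Fin N, k ≤ j.val → a j = a' j) → 0 < (P ^ k) a a' := by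
    intro k
    induction k with
    | zero =>
      intro a a' h
      have h0 : a = a' := funext fun j => h j (Nat.zero_le _)
      subst h0
      simp
    | succ k ih =>
      intro a a' h
      rw [pow_succ, Matrix.mul_apply]
      refine Finset.sum_pos' (fun b _ => mul_nonneg (hnn k a b) (hP_nonneg b a'))
        ⟨fun j => if j.val = k then a j else a' j, Finset.mem_univ _, mul_pos (ih _ _ ?_) (hP_pos _ _ ?_)⟩
      · intro j hj
        by_cases hjk : j.val = k
        · simp [hjk]
        · simp only [hjk, if_false]
          exact h j (by omega)
      · by_cases hk : k < N
        · refine ⟨⟨k, hk⟩, fun j hj => ?_⟩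
          have hjk : j.val ≠ k := fun e => hj (Fin.ext e)
          simp [hjk]
        · refine ⟨⟨0, hN⟩, fun j _ => ?_⟩
          have hjk : j.val ≠ k := by omega
          simp [hjk]
  intro τ hτ a a'
  exact key τ a a' fun j hj => by omega
end
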